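/- arXiv:2101.11542 — 2 statements merged into one kernel-verified Lean document; each statement's English description precedes it below -/
import Mathlib

section
/- Let m be a positive integer, R ⊆ {0,1,…,m−1}, and let A be the set of positive integers a with (a mod m) ∈ R. Then for every ε > 0 there exists N such that for all n ≥ N, the number p_A(n) of partitions of n with all parts in A satisfies p_A(n) ≤ exp((1+ε) · π · √(2·n·|R| / (3·m))). -/
/-- `partitionsIn S n` is the number of partitions of `n` with all parts in `S`. -/
noncomputable def partitionsIn (S : Set ℕ) (n : ℕ) : ℕ :=
  Nat.card {p : n.Partition // ∀ a ∈ p.parts, a ∈ S}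

/-!
Write `p(n)` for the partition count and `A` for the set of allowed parts. Comparing `p(n) e^{-nt}`
with the generating product `∏ (1 - e^{-at})⁻¹` over `a ∈ A`, `a ≤ n`, gives
`log p(n) ≤ n t + ∑ L(a t)` with `L(u) = -log (1 - e^{-u})`, for every `t > 0`.
As `L` is decreasing, the allowed parts in one residue class modulo `m` contribute at most
`L(t) + ∑_{q ≥ 1} L(m q t)`, and expanding the logarithm bounds the last sum by
`∑_k 1 / (k² m t) = π² / (6 m t)`. The choice `t = π √(|R| / (6 m n))` balances `n t` against
`|R| π² / (6 m t)`: their sum is `π √(2 n |R| / (3 m))`, while `|R| L(t) = O(log n)`.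
-/

open Finset Filter Asymptotics

section MultisetProducts

variable {α : Type*}

lemma prod_map_eq_prod_pow_count [DecidableEq α] {β : Type*} [CommMonoid β] (w : α → β)
    {S : Finset α} {M : Multiset α} (hM : ∀ a ∈ M, a ∈ S) :
    (M.map w).prod = ∏ a ∈ S, w a ^ M.count a := by
  rw [Finset.prod_multiset_map_count]
  refine Finset.prod_subset (fun a ha ↦ hM a (Multiset.mem_toFinset.1 ha)) fun a _ ha ↦ ?_
  rw [Multiset.count_eq_zero_of_notMem (mt Multiset.mem_toFinset.2 ha), pow_zero]

lemma sum_prod_map_le_prod_geom_sum {S : Finset α} {P : Finset (Multiset α)} {w : α → ℝ} {N : ℕ}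
    (hP : ∀ M ∈ P, ∀ a ∈ M, a ∈ S) (hN : ∀ M ∈ P, M.card ≤ N) (hw : ∀ a ∈ S, 0 ≤ w a) :
    ∑ M ∈ P, (M.map w).prod ≤ ∏ a ∈ S, ∑ i ∈ range (N + 1), w a ^ i := by
  classical
  let counts (M : Multiset α) (a : S) : ℕ := M.count (a : α)
  have counts_injOn : Set.InjOn counts P := by
    intro M hM M' hM' h
    ext a
    by_cases ha : a ∈ S
    · exact congrFun h ⟨a, ha⟩
    · rw [Multiset.count_eq_zero_of_notMem (mt (hP M hM a) ha),
        Multiset.count_eq_zero_of_notMem (mt (hP M' hM' a) ha)]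
  have counts_mem : P.image counts ⊆ Fintype.piFinset fun _ : S ↦ range (N + 1) := by
    refine Finset.image_subset_iff.2 fun M hM ↦ Fintype.mem_piFinset.2 fun a ↦ ?_
    exact Finset.mem_range_succ_iff.2 ((Multiset.count_le_card _ _).trans (hN M hM))
  calc ∑ M ∈ P, (M.map w).prod
      = ∑ M ∈ P, ∏ a : S, w a ^ counts M a :=
        Finset.sum_congr rfl fun M hM ↦ by
          rw [prod_map_eq_prod_pow_count w (hP M hM), ← Finset.prod_coe_sort]
    _ = ∑ f ∈ P.image counts, ∏ a : S, w a ^ f a :=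
        (Finset.sum_image (f := fun f ↦ ∏ a : S, w a ^ f a) counts_injOn).symm
    _ ≤ ∑ f ∈ Fintype.piFinset fun _ : S ↦ range (N + 1), ∏ a : S, w a ^ f a :=
        Finset.sum_le_sum_of_subset_of_nonneg counts_mem fun f _ _ ↦
          Finset.prod_nonneg fun a _ ↦ pow_nonneg (hw a a.2) _
    _ = ∏ a ∈ S, ∑ i ∈ range (N + 1), w a ^ i := by
        rw [← Finset.prod_univ_sum, Finset.prod_coe_sort S fun a ↦ ∑ i ∈ range (N + 1), w a ^ i]

lemma sum_prod_map_le_prod_inv_one_sub {S : Finset α} {P : Finset (Multiset α)} {w : α → ℝ}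
    (hP : ∀ M ∈ P, ∀ a ∈ M, a ∈ S) (hw₀ : ∀ a ∈ S, 0 ≤ w a) (hw₁ : ∀ a ∈ S, w a < 1) :
    ∑ M ∈ P, (M.map w).prod ≤ ∏ a ∈ S, (1 - w a)⁻¹ := by
  have card_le (M) (hM : M ∈ P) : M.card ≤ P.sup Multiset.card := Finset.le_sup hM
  refine (sum_prod_map_le_prod_geom_sum hP card_le hw₀).trans
    (Finset.prod_le_prod (fun a ha ↦ Finset.sum_nonneg fun i _ ↦ pow_nonneg (hw₀ a ha) i)
      fun a ha ↦ ?_)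
  simpa only [Nat.Ico_zero_eq_range, pow_zero, one_div] using
    geom_sum_Ico_le_of_lt_one (m := 0) (hw₀ a ha) (hw₁ a ha)

end MultisetProducts

section ResidueClasses

variable {M : Type*} [AddCommMonoid M] [PartialOrder M] [IsOrderedAddMonoid M]
  {f : ℕ → M} {m : ℕ}

lemma sum_mod_eq_le_of_antitoneOn (hf : AntitoneOn f (Set.Ici 1)) (hf₀ : ∀ a, 1 ≤ a → 0 ≤ f a)
    (r n : ℕ) :
    ∑ a ∈ Icc 1 n with a % m = r, f a ≤ f 1 + ∑ q ∈ Icc 1 n, f (max 1 (m * q)) := by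
  have div_injOn : Set.InjOn (· / m) ({a ∈ Icc 1 n | a % m = r} : Finset ℕ) := by
    intro a ha b hb (hab : a / m = b / m)
    simp only [coe_filter, Set.mem_ofPred_eq] at ha hb
    rw [← Nat.mod_add_div a m, ← Nat.mod_add_div b m, ha.2, hb.2, hab]
  have div_mem : ({a ∈ Icc 1 n | a % m = r} : Finset ℕ).image (· / m) ⊆ insert 0 (Icc 1 n) := by
    refine Finset.image_subset_iff.2 fun a ha ↦ ?_
    have := Nat.div_le_self a m
    grind
  calc ∑ a ∈ Icc 1 n with a % m = r, f a
      ≤ ∑ a ∈ Icc 1 n with a % m = r, f (max 1 (m * (a / m))) := by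
        refine Finset.sum_le_sum fun a ha ↦ ?_
        have ha₁ : 1 ≤ a := (mem_Icc.1 (mem_filter.1 ha).1).1
        exact hf (Set.mem_Ici.2 (le_max_left _ _)) ha₁ (max_le ha₁ (Nat.mul_div_le a m))
    _ = ∑ q ∈ ({a ∈ Icc 1 n | a % m = r} : Finset ℕ).image (· / m), f (max 1 (m * q)) :=
        (Finset.sum_image (f := fun q ↦ f (max 1 (m * q))) div_injOn).symm
    _ ≤ ∑ q ∈ insert 0 (Icc 1 n), f (max 1 (m * q)) :=
        Finset.sum_le_sum_of_subset_of_nonneg div_mem fun q _ _ ↦ hf₀ _ (le_max_left _ _)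
    _ = f 1 + ∑ q ∈ Icc 1 n, f (max 1 (m * q)) := by
        rw [Finset.sum_insert (by simp), mul_zero, max_eq_left zero_le_one]

lemma sum_mod_mem_le_of_antitoneOn (hf : AntitoneOn f (Set.Ici 1)) (hf₀ : ∀ a, 1 ≤ a → 0 ≤ f a)
    (hm : 0 < m) (R : Finset ℕ) (n : ℕ) :
    ∑ a ∈ Icc 1 n with a % m ∈ R, f a ≤ #R • (f 1 + ∑ q ∈ Icc 1 n, f (m * q)) := by
  have max_eq : ∑ q ∈ Icc 1 n, f (max 1 (m * q)) = ∑ q ∈ Icc 1 n, f (m * q) :=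
    Finset.sum_congr rfl fun q hq ↦ by
      rw [max_eq_right (Nat.mul_pos hm (mem_Icc.1 hq).1)]
  calc ∑ a ∈ Icc 1 n with a % m ∈ R, f a
      = ∑ r ∈ R, ∑ a ∈ Icc 1 n with a % m = r, f a := by
        rw [← Finset.sum_fiberwise_of_maps_to (g := (· % m)) fun a ha ↦ (mem_filter.1 ha).2]
        refine Finset.sum_congr rfl fun r hr ↦ Finset.sum_congr ?_ fun _ _ ↦ rfl
        ext a
        simp only [mem_filter]
        grind
    _ ≤ #R • (f 1 + ∑ q ∈ Icc 1 n, f (m * q)) :=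
        Finset.sum_le_card_nsmul _ _ _ fun r _ ↦
          max_eq ▸ sum_mod_eq_le_of_antitoneOn hf hf₀ r n

end ResidueClasses

/-- The logarithm of the geometric series `∑ i, e^{-iu} = (1 - e^{-u})⁻¹`. With `u = a * t` it is
the logarithm of the factor that the part `a` contributes to the generating product of partitions
at `e^{-t}`. It is meant for `u > 0` only. -/
noncomputable def logGeom (u : ℝ) : ℝ := -Real.log (1 - Real.exp (-u))

section LogGeom

variable {u : ℝ}

lemma one_sub_exp_neg_pos (hu : 0 < u) : 0 < 1 - Real.exp (-u) := by
  simpa using hu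

lemma exp_logGeom (hu : 0 < u) : Real.exp (logGeom u) = (1 - Real.exp (-u))⁻¹ := by
  rw [logGeom, Real.exp_neg, Real.exp_log (one_sub_exp_neg_pos hu)]

lemma logGeom_antitoneOn : AntitoneOn logGeom (Set.Ioi 0) := by
  intro u hu v _ huv
  exact neg_le_neg (Real.log_le_log (one_sub_exp_neg_pos hu) (by gcongr))

lemma logGeom_nonneg (hu : 0 < u) : 0 ≤ logGeom u :=
  neg_nonneg.2 (Real.log_nonpos (one_sub_exp_neg_pos hu).le
    (sub_le_self _ (Real.exp_pos _).le))

lemma exp_neg_div_one_sub_exp_neg_le_inv (hu : 0 < u) :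
    Real.exp (-u) / (1 - Real.exp (-u)) ≤ u⁻¹ := by
  rw [div_le_iff₀ (one_sub_exp_neg_pos hu), ← div_eq_inv_mul, le_div_iff₀ hu]
  have key : Real.exp (-u) * (u + 1) ≤ Real.exp (-u) * Real.exp u := by
    gcongr
    exact Real.add_one_le_exp u
  rw [← Real.exp_add, neg_add_cancel, Real.exp_zero] at key
  linarith

lemma logGeom_le_log_one_add_inv (hu : 0 < u) : logGeom u ≤ Real.log (1 + u⁻¹) := by
  have hpos := one_sub_exp_neg_pos hu
  rw [logGeom, ← Real.log_inv]
  refine Real.log_le_log (inv_pos.2 hpos) ?_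
  calc (1 - Real.exp (-u))⁻¹ = 1 + Real.exp (-u) / (1 - Real.exp (-u)) := by
        field_simp
        ring
    _ ≤ 1 + u⁻¹ := by gcongr; exact exp_neg_div_one_sub_exp_neg_le_inv hu

lemma hasSum_logGeom (hu : 0 < u) :
    HasSum (fun k : ℕ ↦ Real.exp (-((k + 1) * u)) / (k + 1)) (logGeom u) := by
  have h := Real.hasSum_pow_div_log_of_abs_lt_one (x := Real.exp (-u)) (by simpa using hu)
  simpa [logGeom, ← Real.exp_nat_mul] using h

lemma sum_exp_neg_mul_le_inv (hu : 0 < u) (N : ℕ) :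
    ∑ q ∈ Icc 1 N, Real.exp (-(q * u)) ≤ u⁻¹ := by
  calc ∑ q ∈ Icc 1 N, Real.exp (-(q * u)) = ∑ q ∈ Ico 1 (N + 1), Real.exp (-u) ^ q := by
        simp only [Finset.Ico_add_one_right_eq_Icc, ← Real.exp_nat_mul, mul_neg]
    _ ≤ Real.exp (-u) ^ 1 / (1 - Real.exp (-u)) :=
        geom_sum_Ico_le_of_lt_one (Real.exp_pos _).le (by simpa using hu)
    _ ≤ u⁻¹ := by simpa only [pow_one] using exp_neg_div_one_sub_exp_neg_le_inv hu

lemma sum_logGeom_mul_le (hu : 0 < u) (N : ℕ) :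
    ∑ q ∈ Icc 1 N, logGeom (q * u) ≤ Real.pi ^ 2 / 6 * u⁻¹ := by
  have hasSum_lhs : HasSum
      (fun k : ℕ ↦ ∑ q ∈ Icc 1 N, Real.exp (-((k + 1) * (q * u))) / (k + 1))
      (∑ q ∈ Icc 1 N, logGeom (q * u)) :=
    hasSum_sum fun q hq ↦
      hasSum_logGeom (mul_pos (Nat.cast_pos.2 (mem_Icc.1 hq).1) hu)
  have hasSum_inv_sq : HasSum (fun k : ℕ ↦ 1 / ((k : ℝ) + 1) ^ 2) (Real.pi ^ 2 / 6) := by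
    simpa using (hasSum_nat_add_iff' 1).2 hasSum_zeta_two
  refine hasSum_le (fun k ↦ ?_) hasSum_lhs (hasSum_inv_sq.mul_right u⁻¹)
  have hk : (0 : ℝ) < k + 1 := k.cast_add_one_pos
  calc ∑ q ∈ Icc 1 N, Real.exp (-((k + 1) * (q * u))) / (k + 1)
      = (∑ q ∈ Icc 1 N, Real.exp (-(q * ((k + 1) * u)))) / (k + 1) := by
        simp only [Finset.sum_div, mul_left_comm]
    _ ≤ ((k + 1) * u)⁻¹ / (k + 1) := by gcongr; exact sum_exp_neg_mul_le_inv (mul_pos hk hu) N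
    _ = 1 / ((k : ℝ) + 1) ^ 2 * u⁻¹ := by field_simp

end LogGeom

section PartitionCount

lemma partitionsIn_empty {n : ℕ} (hn : n ≠ 0) : partitionsIn ∅ n = 0 := by
  rw [partitionsIn, Nat.card_eq_zero]
  refine Or.inl ⟨fun ⟨p, hp⟩ ↦ hn ?_⟩
  rw [← p.parts_sum, Multiset.eq_zero_of_forall_notMem hp, Multiset.sum_zero]

lemma prod_map_exp_parts {n : ℕ} (p : n.Partition) (t : ℝ) :
    (p.parts.map fun a : ℕ ↦ Real.exp (-(a * t))).prod = Real.exp (-(n * t)) := by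
  have sum_parts : (p.parts.map fun a : ℕ ↦ -((a : ℝ) * t)).sum = -(n * t) := by
    simp only [Multiset.sum_map_neg, Multiset.sum_map_mul_right]
    rw [← Nat.cast_multiset_sum, p.parts_sum]
  rw [← sum_parts, Real.exp_multiset_sum, Multiset.map_map, Function.comp_def]

section DecidableParts

variable (A : Set ℕ) [DecidablePred (· ∈ A)] (n : ℕ)

lemma partitionsIn_eq_card_restricted :
    partitionsIn A n = #(Nat.Partition.restricted n (· ∈ A)) := by
  rw [partitionsIn, Nat.card_eq_fintype_card, Fintype.card_subtype, Nat.Partition.restricted]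

lemma partitionsIn_mul_exp_le_prod {t : ℝ} (ht : 0 < t) :
    partitionsIn A n * Real.exp (-(n * t)) ≤
      ∏ a ∈ Icc 1 n with a ∈ A, (1 - Real.exp (-(a * t)))⁻¹ := by
  have parts_injective : Function.Injective (Nat.Partition.parts (n := n)) :=
    fun _ _ ↦ Nat.Partition.ext
  calc partitionsIn A n * Real.exp (-(n * t))
      = ∑ M ∈ (Nat.Partition.restricted n (· ∈ A)).image Nat.Partition.parts,
          (M.map fun a : ℕ ↦ Real.exp (-(a * t))).prod := by
        rw [Finset.sum_image parts_injective.injOn, partitionsIn_eq_card_restricted]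
        simp only [prod_map_exp_parts, sum_const, nsmul_eq_mul]
    _ ≤ ∏ a ∈ Icc 1 n with a ∈ A, (1 - Real.exp (-(a * t)))⁻¹ := by
        refine sum_prod_map_le_prod_inv_one_sub ?_ (fun a _ ↦ (Real.exp_pos _).le) fun a ha ↦ ?_
        · refine Finset.forall_mem_image.2 fun p hp a ha ↦ ?_
          rw [mem_filter, mem_Icc]
          exact ⟨⟨p.parts_pos ha, p.le_of_mem_parts ha⟩, (mem_filter.1 hp).2 a ha⟩
        · have : (0 : ℝ) < a := Nat.cast_pos.2 (mem_Icc.1 (mem_filter.1 ha).1).1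
          exact sub_pos.1 (one_sub_exp_neg_pos (mul_pos this ht))

lemma partitionsIn_le_exp_sum_logGeom {t : ℝ} (ht : 0 < t) :
    partitionsIn A n ≤ Real.exp (n * t + ∑ a ∈ Icc 1 n with a ∈ A, logGeom (a * t)) := by
  have prod_eq : ∏ a ∈ Icc 1 n with a ∈ A, (1 - Real.exp (-(a * t)))⁻¹ =
      Real.exp (∑ a ∈ Icc 1 n with a ∈ A, logGeom (a * t)) := by
    rw [Real.exp_sum]
    refine Finset.prod_congr rfl fun a ha ↦ (exp_logGeom (mul_pos ?_ ht)).symm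
    exact Nat.cast_pos.2 (mem_Icc.1 (mem_filter.1 ha).1).1
  have h := partitionsIn_mul_exp_le_prod A n ht
  rwa [prod_eq, Real.exp_neg, ← div_eq_mul_inv, div_le_iff₀' (Real.exp_pos _),
    ← Real.exp_add] at h

end DecidableParts

lemma sum_logGeom_mod_mem_le {m : ℕ} (hm : 0 < m) (R : Finset ℕ) (n : ℕ) {t : ℝ} (ht : 0 < t) :
    ∑ a ∈ Icc 1 n with a % m ∈ R, logGeom (a * t) ≤
      #R * (Real.log (1 + t⁻¹) + Real.pi ^ 2 / 6 * (m * t)⁻¹) := by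
  have arg_pos {a : ℕ} (ha : 1 ≤ a) : 0 < a * t := mul_pos (Nat.cast_pos.2 ha) ht
  have antitone : AntitoneOn (fun a : ℕ ↦ logGeom (a * t)) (Set.Ici 1) := fun a ha b hb hab ↦
    logGeom_antitoneOn (arg_pos ha) (arg_pos hb) (by gcongr)
  have first_le : logGeom ((1 : ℕ) * t) ≤ Real.log (1 + t⁻¹) := by
    simpa using logGeom_le_log_one_add_inv ht
  have rest_le : ∑ q ∈ Icc 1 n, logGeom ((m * q : ℕ) * t) ≤ Real.pi ^ 2 / 6 * (m * t)⁻¹ := by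
    simpa only [Nat.cast_mul, mul_assoc, mul_left_comm] using sum_logGeom_mul_le (arg_pos hm) n
  calc ∑ a ∈ Icc 1 n with a % m ∈ R, logGeom (a * t)
      ≤ #R • (logGeom ((1 : ℕ) * t) + ∑ q ∈ Icc 1 n, logGeom ((m * q : ℕ) * t)) :=
        sum_mod_mem_le_of_antitoneOn antitone (fun a ha ↦ logGeom_nonneg (arg_pos ha)) hm R n
    _ ≤ #R * (Real.log (1 + t⁻¹) + Real.pi ^ 2 / 6 * (m * t)⁻¹) := by
        rw [nsmul_eq_mul]
        gcongr

lemma partitionsIn_mod_mem_le_exp {m : ℕ} (hm : 0 < m) (R : Finset ℕ) (n : ℕ) {t : ℝ}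
    (ht : 0 < t) :
    partitionsIn {a | 0 < a ∧ a % m ∈ R} n ≤
      Real.exp (n * t + #R * (Real.log (1 + t⁻¹) + Real.pi ^ 2 / 6 * (m * t)⁻¹)) := by
  have parts_eq : {a ∈ Icc 1 n | a ∈ {a | 0 < a ∧ a % m ∈ R}} = {a ∈ Icc 1 n | a % m ∈ R} :=
    Finset.filter_congr fun a ha ↦ and_iff_right (mem_Icc.1 ha).1
  refine (partitionsIn_le_exp_sum_logGeom _ n ht).trans (Real.exp_le_exp.2 ?_)
  rw [parts_eq]
  gcongr
  exact sum_logGeom_mod_mem_le hm R n ht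

lemma pi_mul_sqrt_eq {c m : ℝ} (hc : 0 < c) (hm : 0 < m) (x : ℝ) :
    Real.pi * √(2 * x * c / (3 * m)) =
      c * Real.pi ^ 2 / (3 * m) * (√(6 * m * x / c) / Real.pi) := by
  have factor : 2 * x * c / (3 * m) = (c / (3 * m)) ^ 2 * (6 * m * x / c) := by
    field_simp
    ring
  rw [factor, Real.sqrt_mul (sq_nonneg _), Real.sqrt_sq (by positivity)]
  field_simp

lemma partitionsIn_mod_mem_le_exp_sqrt {m : ℕ} (hm : 0 < m) {R : Finset ℕ} (hR : R.Nonempty)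
    {n : ℕ} (hn : 0 < n) :
    partitionsIn {a | 0 < a ∧ a % m ∈ R} n ≤
      Real.exp (Real.pi * √(2 * n * #R / (3 * m)) +
        #R * Real.log (1 + √(6 * m * n / #R) / Real.pi)) := by
  have hc : (0 : ℝ) < #R := Nat.cast_pos.2 hR.card_pos
  have hm' : (0 : ℝ) < m := Nat.cast_pos.2 hm
  have : (0 : ℝ) < n := Nat.cast_pos.2 hn
  obtain ⟨s, hs⟩ : ∃ s, s = √(6 * m * n / #R) / Real.pi := ⟨_, rfl⟩
  have s_pos : 0 < s := by rw [hs]; positivity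
  have n_eq : (n : ℝ) = #R * Real.pi ^ 2 / (6 * m) * s ^ 2 := by
    rw [hs, div_pow, Real.sq_sqrt (by positivity)]
    field_simp
  have first_half : n * s⁻¹ = #R * Real.pi ^ 2 / (6 * m) * s := by
    rw [mul_inv_eq_iff_eq_mul₀ s_pos.ne', mul_assoc, ← sq, ← n_eq]
  have second_half : #R * (Real.pi ^ 2 / 6 * (m * s⁻¹)⁻¹) = #R * Real.pi ^ 2 / (6 * m) * s := by
    rw [mul_inv, inv_inv]
    ring
  refine (partitionsIn_mod_mem_le_exp hm R n (inv_pos.2 s_pos)).trans_eq (congrArg Real.exp ?_)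
  rw [pi_mul_sqrt_eq hc hm', ← hs, mul_add, inv_inv, first_half, second_half]
  ring

end PartitionCount

lemma isLittleO_log_one_add_atTop : (fun x : ℝ ↦ Real.log (1 + x)) =o[atTop] (id : ℝ → ℝ) :=
  (Real.isLittleO_log_id_atTop.comp_tendsto
    (tendsto_atTop_add_const_left _ 1 tendsto_id)).trans_isBigO
    ((isLittleO_const_id_atTop (1 : ℝ)).isBigO.add (isBigO_refl id atTop))

lemma eventually_mul_log_le_pi_mul_sqrt {c m ε : ℝ} (hc : 0 < c) (hm : 0 < m) (hε : 0 < ε) :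
    ∀ᶠ n : ℕ in atTop, c * Real.log (1 + √(6 * m * n / c) / Real.pi) ≤
      ε * (Real.pi * √(2 * n * c / (3 * m))) := by
  have tendsto_arg : Tendsto (fun n : ℕ ↦ √(6 * m * n / c) / Real.pi) atTop atTop := by
    refine (Real.tendsto_sqrt_atTop.comp ?_).atTop_div_const Real.pi_pos
    exact (tendsto_natCast_atTop_atTop.const_mul_atTop (by positivity)).atTop_div_const hc
  have log_small := (isLittleO_log_one_add_atTop.const_mul_left c).bound
    (show 0 < ε * (c * Real.pi ^ 2 / (3 * m)) by positivity)
  filter_upwards [tendsto_arg.eventually log_small] with n hn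
  rw [pi_mul_sqrt_eq hc hm, ← mul_assoc]
  refine (le_abs_self _).trans (hn.trans_eq ?_)
  rw [id, Real.norm_of_nonneg (by positivity)]

theorem stmt_2 (m : ℕ) (hm : 0 < m) (R : Finset ℕ) (hR : R ⊆ Finset.range m)
    (A : Set ℕ) (hA : A = {a : ℕ | 0 < a ∧ a % m ∈ R}) :
    ∀ ε : ℝ, 0 < ε → ∃ N : ℕ, ∀ n : ℕ, N ≤ n →
      (partitionsIn A n : ℝ) ≤
        Real.exp ((1 + ε) * Real.pi * Real.sqrt (2 * n * R.card / (3 * m))) := by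
  intro ε hε
  subst hA
  rw [← eventually_atTop]
  rcases R.eq_empty_or_nonempty with rfl | hR_nonempty
  · filter_upwards [eventually_ne_atTop 0] with n hn
    simp [partitionsIn_empty hn]
  · have error_small := eventually_mul_log_le_pi_mul_sqrt
      (Nat.cast_pos.2 hR_nonempty.card_pos) (Nat.cast_pos.2 hm) hε
    filter_upwards [eventually_gt_atTop 0, error_small] with n hn herror
    refine (partitionsIn_mod_mem_le_exp_sqrt hm hR_nonempty hn).trans (Real.exp_le_exp.2 ?_)
    linarith
end

section
/- Let m be a positive integer, R ⊆ {0,1,…,m−1}, let A be the set of positive integers a with (a mod m) ∈ R, and set c = π · √(2·|R| / (3·m)). Then for every natural number n, the number p_A(n) of partitions of n with all parts in A satisfies p_A(n) ≤ (n+1)^{|R|+1} · exp(c·√n). -/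
/-!
For every `s > 0`, each partition counted by `p_S(n)` contributes `e^{-sn}` to the Euler product
`∏_{a ∈ S} ∑_i e^{-sai}`, so `p_S(n) e^{-sn}` is at most that product over the parts `a ≤ n`, with
the inner sums truncated at `i = n`. A factor with `a < m` is at most `n + 1`. A factor with
`qm ≤ a < (q+1)m` and `q ≥ 1` is at most `(1 - e^{-smq})⁻¹`, and if `S` meets each such block in at
most `k` points, these contribute at most `(∏_q (1 - e^{-smq})⁻¹)^k ≤ e^{kπ²/(6sm)}`, by the
logarithm series and `ζ(2) = π²/6`. Minimising `sn + kπ²/(6sm)` over `s` gives the exponent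
`2 √(n k π²/(6m)) = π √(2k/(3m)) √n`.
-/

open Finset Topology
open scoped Real
open Real (exp log)

section PartitionCount

variable {n : ℕ}

lemma count_parts_le (p : n.Partition) (a : ℕ) : p.parts.count a ≤ n :=
  calc p.parts.count a ≤ p.parts.card := Multiset.count_le_card a p.parts
    _ ≤ p.parts.sum := by
      simpa using Multiset.card_nsmul_le_sum (a := 1) fun _ ↦ p.parts_pos
    _ = n := p.parts_sum

lemma prod_pow_pow_count_parts {M : Type*} [CommMonoid M] (x : M) (p : n.Partition) {s : Finset ℕ}
    (hs : ∀ a ∈ p.parts, a ∈ s) : ∏ a ∈ s, (x ^ a) ^ p.parts.count a = x ^ n := by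
  have hsub : p.parts.toFinset ⊆ s := fun a ha ↦ hs a (Multiset.mem_toFinset.mp ha)
  have hsum : ∑ a ∈ s, p.parts.count a • a = n :=
    (Finset.sum_multiset_count_of_subset p.parts s hsub).symm.trans p.parts_sum
  simp_rw [← pow_mul, Finset.prod_pow_eq_pow_sum, mul_comm _ (p.parts.count _), ← smul_eq_mul, hsum]

variable {S : Set ℕ} [DecidablePred (· ∈ S)]

lemma mem_filter_Icc_of_mem_parts {p : n.Partition} (hp : ∀ a ∈ p.parts, a ∈ S) {a : ℕ}
    (ha : a ∈ p.parts) : a ∈ (Icc 1 n).filter (· ∈ S) :=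
  mem_filter.mpr ⟨mem_Icc.mpr ⟨p.parts_pos ha, p.le_of_mem_parts ha⟩, hp a ha⟩

lemma injective_count_parts : Function.Injective
    fun (p : {p : n.Partition // ∀ a ∈ p.parts, a ∈ S}) (a : (Icc 1 n).filter (· ∈ S)) ↦
      p.1.parts.count (a : ℕ) := by
  intro p q hpq
  ext a
  by_cases ha : a ∈ (Icc 1 n).filter (· ∈ S)
  · exact congrFun hpq ⟨a, ha⟩
  · rw [Multiset.count_eq_zero_of_notMem (mt (mem_filter_Icc_of_mem_parts p.2) ha),
      Multiset.count_eq_zero_of_notMem (mt (mem_filter_Icc_of_mem_parts q.2) ha)]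

lemma partitionsIn_mul_pow_le_prod_sum_pow {K : Type*} [CommSemiring K] [PartialOrder K]
    [IsOrderedRing K] {x : K} (hx : 0 ≤ x) :
    partitionsIn S n * x ^ n ≤ ∏ a ∈ Icc 1 n with a ∈ S, ∑ i ∈ range (n + 1), (x ^ a) ^ i := by
  classical
  set s := (Icc 1 n).filter (· ∈ S)
  let weight (g : s → ℕ) : K := ∏ a : s, (x ^ (a : ℕ)) ^ g a
  let mult (p : {p : n.Partition // ∀ a ∈ p.parts, a ∈ S}) (a : s) : ℕ := p.1.parts.count (a : ℕ)
  have weight_mult (p) : weight (mult p) = x ^ n :=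
    (prod_coe_sort s fun a ↦ (x ^ a) ^ p.1.parts.count a).trans
      (prod_pow_pow_count_parts x p.1 fun _ ↦ mem_filter_Icc_of_mem_parts p.2)
  calc partitionsIn S n * x ^ n = ∑ p, weight (mult p) := by
        simp [weight_mult, partitionsIn, Nat.card_eq_fintype_card]
    _ = ∑ g ∈ univ.image mult, weight g := (sum_image injective_count_parts.injOn).symm
    _ ≤ ∑ g ∈ Fintype.piFinset fun _ ↦ range (n + 1), weight g := by
        refine sum_le_sum_of_subset_of_nonneg (fun g hg ↦ ?_) fun g _ _ ↦
          prod_nonneg fun _ _ ↦ pow_nonneg (pow_nonneg hx _) _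
        obtain ⟨p, -, rfl⟩ := mem_image.mp hg
        exact Fintype.mem_piFinset.mpr fun a ↦
          mem_range_succ_iff.mpr (count_parts_le p.1 a)
    _ = ∏ a ∈ s, ∑ i ∈ range (n + 1), (x ^ a) ^ i := by
        rw [← prod_univ_sum, prod_coe_sort s fun a ↦ ∑ i ∈ range (n + 1), (x ^ a) ^ i]

end PartitionCount

section EulerProduct

variable {t : ℝ}

lemma exp_neg_div_one_sub_exp_neg_le (ht : 0 < t) : exp (-t) / (1 - exp (-t)) ≤ 1 / t := by
  have hlt : exp (-t) < 1 := Real.exp_lt_one_iff.mpr (neg_lt_zero.mpr ht)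
  have hmul : exp (-t) * (t + 1) ≤ 1 :=
    calc exp (-t) * (t + 1) ≤ exp (-t) * exp t := by gcongr; exact Real.add_one_le_exp t
      _ = 1 := by rw [← Real.exp_add, neg_add_cancel, Real.exp_zero]
  rw [div_le_div_iff₀ (sub_pos.mpr hlt) ht]
  linarith

lemma sum_Ico_one_exp_neg_pow_le (ht : 0 < t) (N : ℕ) :
    ∑ q ∈ Ico 1 N, exp (-t) ^ q ≤ 1 / t :=
  calc ∑ q ∈ Ico 1 N, exp (-t) ^ q ≤ exp (-t) ^ 1 / (1 - exp (-t)) :=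
        geom_sum_Ico_le_of_lt_one (Real.exp_pos _).le (Real.exp_lt_one_iff.mpr (neg_lt_zero.mpr ht))
    _ ≤ 1 / t := by simpa only [pow_one] using exp_neg_div_one_sub_exp_neg_le ht

lemma exp_neg_pow_lt_one (ht : 0 < t) {q : ℕ} (hq : q ≠ 0) : exp (-t) ^ q < 1 :=
  pow_lt_one₀ (Real.exp_pos _).le (Real.exp_lt_one_iff.mpr (neg_lt_zero.mpr ht)) hq

lemma sum_Ico_one_neg_log_one_sub_exp_neg_pow_le (ht : 0 < t) (N : ℕ) :
    ∑ q ∈ Ico 1 N, -log (1 - exp (-t) ^ q) ≤ π ^ 2 / (6 * t) := by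
  have hlog : ∀ q ∈ Ico 1 N, HasSum (fun j : ℕ ↦ (exp (-t) ^ q) ^ (j + 1) / ((j : ℝ) + 1))
      (-log (1 - exp (-t) ^ q)) := fun q hq ↦ by
    refine Real.hasSum_pow_div_log_of_abs_lt_one ?_
    rw [abs_of_pos (by positivity)]
    exact exp_neg_pow_lt_one ht (by grind)
  have hzeta : HasSum (fun j : ℕ ↦ 1 / t * (1 / ((j : ℝ) + 1) ^ 2)) (1 / t * (π ^ 2 / 6)) := by
    refine HasSum.mul_left _ ?_
    simpa using (hasSum_nat_add_iff' 1).mpr hasSum_zeta_two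
  have hterm (j : ℕ) : ∑ q ∈ Ico 1 N, (exp (-t) ^ q) ^ (j + 1) / ((j : ℝ) + 1) ≤
      1 / t * (1 / ((j : ℝ) + 1) ^ 2) := by
    have hpow (q : ℕ) : (exp (-t) ^ q) ^ (j + 1) = exp (-((j + 1) * t)) ^ q := by
      simp_rw [← Real.exp_nat_mul]
      push_cast
      ring_nf
    calc ∑ q ∈ Ico 1 N, (exp (-t) ^ q) ^ (j + 1) / ((j : ℝ) + 1)
        = (∑ q ∈ Ico 1 N, exp (-((j + 1) * t)) ^ q) / ((j : ℝ) + 1) := by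
          simp_rw [hpow, sum_div]
      _ ≤ 1 / ((j + 1) * t) / ((j : ℝ) + 1) := by
          gcongr
          exact sum_Ico_one_exp_neg_pow_le (by positivity) N
      _ = 1 / t * (1 / ((j : ℝ) + 1) ^ 2) := by field_simp
  calc ∑ q ∈ Ico 1 N, -log (1 - exp (-t) ^ q) ≤ 1 / t * (π ^ 2 / 6) :=
        hasSum_le hterm (hasSum_sum hlog) hzeta
    _ = π ^ 2 / (6 * t) := by field_simp

lemma prod_Ico_one_inv_one_sub_exp_neg_pow_le (ht : 0 < t) (N : ℕ) :
    ∏ q ∈ Ico 1 N, (1 - exp (-t) ^ q)⁻¹ ≤ exp (π ^ 2 / (6 * t)) :=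
  calc ∏ q ∈ Ico 1 N, (1 - exp (-t) ^ q)⁻¹
      = exp (∑ q ∈ Ico 1 N, -log (1 - exp (-t) ^ q)) := by
        rw [Real.exp_sum]
        refine prod_congr rfl fun q hq ↦ ?_
        have hlt : exp (-t) ^ q < 1 := exp_neg_pow_lt_one ht (by grind)
        rw [Real.exp_neg (log _), Real.exp_log (sub_pos.mpr hlt)]
    _ ≤ exp (π ^ 2 / (6 * t)) :=
        Real.exp_le_exp.mpr (sum_Ico_one_neg_log_one_sub_exp_neg_pow_le ht N)

end EulerProduct

section Blocks

lemma prod_comp_le_prod_pow_of_card_fiber_le {ι κ K : Type*} [DecidableEq κ] [CommSemiring K]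
    [PartialOrder K] [IsOrderedRing K] {s : Finset ι} {t : Finset κ} {g : ι → κ} {f : κ → K} {k : ℕ}
    (hg : ∀ i ∈ s, g i ∈ t) (hk : ∀ j ∈ t, #{i ∈ s | g i = j} ≤ k) (hf : ∀ j ∈ t, 1 ≤ f j) :
    ∏ i ∈ s, f (g i) ≤ (∏ j ∈ t, f j) ^ k := by
  rw [← prod_fiberwise_of_maps_to' hg, ← prod_pow]
  simp_rw [prod_const]
  exact prod_le_prod (fun j hj ↦ pow_nonneg (zero_le_one.trans (hf j hj)) _)
    fun j hj ↦ pow_le_pow_right₀ (hf j hj) (hk j hj)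

variable {S : Set ℕ} {m n : ℕ}

lemma ncard_residues_inter_Ico_le (R : Finset ℕ) (q : ℕ) :
    ({a : ℕ | 0 < a ∧ a % m ∈ R} ∩ Set.Ico (q * m) ((q + 1) * m)).ncard ≤ #R := by
  rw [← Set.ncard_coe_finset R]
  refine Set.ncard_le_ncard_of_injOn (· % m) (fun a ha ↦ ha.1.2) ?_ R.finite_toSet
  rintro a ⟨-, ha⟩ b ⟨-, hb⟩ (hab : a % m = b % m)
  rw [← Nat.div_add_mod a m, ← Nat.div_add_mod b m, Nat.div_eq_of_lt_le ha.1 ha.2,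
    Nat.div_eq_of_lt_le hb.1 hb.2, hab]

lemma ncard_residues_inter_Ioo_le (R : Finset ℕ) :
    ({a : ℕ | 0 < a ∧ a % m ∈ R} ∩ Set.Ioo 0 m).ncard ≤ #R := by
  rw [← Set.ncard_coe_finset R]
  refine Set.ncard_le_ncard (fun a ⟨⟨_, haR⟩, ham⟩ ↦ ?_) R.finite_toSet
  rwa [Nat.mod_eq_of_lt ham.2] at haR

lemma card_filter_div_eq_le_ncard (hm : 0 < m) (s : Finset ℕ) (hs : ∀ a ∈ s, a ∈ S) (q : ℕ) :
    #{a ∈ s | a / m = q} ≤ (S ∩ Set.Ico (q * m) ((q + 1) * m)).ncard := by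
  rw [← Set.ncard_coe_finset]
  refine Set.ncard_le_ncard (fun a ha ↦ ?_) ((Set.finite_Ico _ _).inter_of_right S)
  obtain ⟨has, rfl⟩ := mem_filter.mp ha
  exact ⟨hs a has, Nat.div_mul_le_self a m, Nat.lt_mul_of_div_lt (Nat.lt_succ_self _) hm⟩

variable [DecidablePred (· ∈ S)]

lemma card_filter_Icc_lt_le_ncard :
    #{a ∈ Icc 1 n | a ∈ S ∧ a < m} ≤ (S ∩ Set.Ioo 0 m).ncard := by
  rw [← Set.ncard_coe_finset]
  refine Set.ncard_le_ncard (fun a ha ↦ ?_) ((Set.finite_Ioo 0 m).inter_of_right S)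
  obtain ⟨hIcc, haS, ham⟩ := mem_filter.mp ha
  exact ⟨haS, (mem_Icc.mp hIcc).1, ham⟩

lemma prod_sum_pow_le_of_lt {x : ℝ} (hx₀ : 0 ≤ x) (hx₁ : x ≤ 1) :
    ∏ a ∈ Icc 1 n with a ∈ S ∧ a < m, ∑ i ∈ range (n + 1), (x ^ a) ^ i ≤
      ((n : ℝ) + 1) ^ (S ∩ Set.Ioo 0 m).ncard := by
  have hfactor (a : ℕ) : ∑ i ∈ range (n + 1), (x ^ a) ^ i ≤ (n : ℝ) + 1 :=
    calc ∑ i ∈ range (n + 1), (x ^ a) ^ i ≤ ∑ _ ∈ range (n + 1), (1 : ℝ) :=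
          sum_le_sum fun i _ ↦ pow_le_one₀ (pow_nonneg hx₀ a) (pow_le_one₀ hx₀ hx₁)
      _ = (n : ℝ) + 1 := by simp
  calc ∏ a ∈ Icc 1 n with a ∈ S ∧ a < m, ∑ i ∈ range (n + 1), (x ^ a) ^ i
      ≤ ∏ a ∈ Icc 1 n with a ∈ S ∧ a < m, ((n : ℝ) + 1) :=
        prod_le_prod (fun _ _ ↦ by positivity) fun a _ ↦ hfactor a
    _ = ((n : ℝ) + 1) ^ #{a ∈ Icc 1 n | a ∈ S ∧ a < m} := prod_const _
    _ ≤ ((n : ℝ) + 1) ^ (S ∩ Set.Ioo 0 m).ncard :=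
        pow_le_pow_right₀ (by simp) card_filter_Icc_lt_le_ncard

lemma sum_exp_neg_pow_pow_le {s : ℝ} (hs : 0 < s) (hm : 0 < m) {a : ℕ} (ha : m ≤ a) (N : ℕ) :
    ∑ i ∈ range N, (exp (-s) ^ a) ^ i ≤ (1 - exp (-(m * s)) ^ (a / m))⁻¹ := by
  have hblock : exp (-s) ^ a ≤ exp (-(m * s)) ^ (a / m) :=
    calc exp (-s) ^ a ≤ exp (-s) ^ (m * (a / m)) :=
          pow_le_pow_of_le_one (Real.exp_pos _).le (Real.exp_le_one_iff.mpr (neg_nonpos.mpr hs.le))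
            (Nat.mul_div_le a m)
      _ = exp (-(m * s)) ^ (a / m) := by
          rw [pow_mul, ← Real.exp_nat_mul, mul_neg]
  have hlt : exp (-(m * s)) ^ (a / m) < 1 :=
    exp_neg_pow_lt_one (by positivity) (Nat.div_pos ha hm).ne'
  calc ∑ i ∈ range N, (exp (-s) ^ a) ^ i ≤ (exp (-s) ^ a) ^ 0 / (1 - exp (-s) ^ a) := by
        rw [range_eq_Ico]
        exact geom_sum_Ico_le_of_lt_one (by positivity) (hblock.trans_lt hlt)
    _ = (1 - exp (-s) ^ a)⁻¹ := by rw [pow_zero, one_div]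
    _ ≤ (1 - exp (-(m * s)) ^ (a / m))⁻¹ :=
        inv_anti₀ (sub_pos.mpr hlt) (sub_le_sub_left hblock 1)

lemma prod_sum_exp_neg_pow_le_of_le {s : ℝ} (hs : 0 < s) (hm : 0 < m) {k : ℕ}
    (hk : ∀ q, 0 < q → (S ∩ Set.Ico (q * m) ((q + 1) * m)).ncard ≤ k) :
    ∏ a ∈ Icc 1 n with a ∈ S ∧ m ≤ a, ∑ i ∈ range (n + 1), (exp (-s) ^ a) ^ i ≤
      exp (π ^ 2 / (6 * (m * s))) ^ k := by
  have hms : 0 < m * s := by positivity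
  have hlt {q : ℕ} (hq : q ∈ Ico 1 (n + 1)) : exp (-(m * s)) ^ q < 1 :=
    exp_neg_pow_lt_one hms (Nat.one_le_iff_ne_zero.mp (mem_Ico.mp hq).1)
  calc ∏ a ∈ Icc 1 n with a ∈ S ∧ m ≤ a, ∑ i ∈ range (n + 1), (exp (-s) ^ a) ^ i
      ≤ ∏ a ∈ Icc 1 n with a ∈ S ∧ m ≤ a, (1 - exp (-(m * s)) ^ (a / m))⁻¹ :=
        prod_le_prod (fun _ _ ↦ by positivity) fun a ha ↦
          sum_exp_neg_pow_pow_le hs hm (mem_filter.mp ha).2.2 _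
    _ ≤ (∏ q ∈ Ico 1 (n + 1), (1 - exp (-(m * s)) ^ q)⁻¹) ^ k := by
        refine prod_comp_le_prod_pow_of_card_fiber_le (g := (· / m))
          (f := fun q ↦ (1 - exp (-(m * s)) ^ q)⁻¹) (fun a ha ↦ ?_) (fun q hq ↦ ?_) fun q hq ↦ ?_
        · obtain ⟨hIcc, -, hma⟩ := mem_filter.mp ha
          exact mem_Ico.mpr ⟨Nat.div_pos hma hm,
            Nat.lt_succ_of_le ((Nat.div_le_self a m).trans (mem_Icc.mp hIcc).2)⟩
        · exact (card_filter_div_eq_le_ncard hm _ (fun a ha ↦ (mem_filter.mp ha).2.1) q).trans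
            (hk q (mem_Ico.mp hq).1)
        · exact (one_le_inv₀ (sub_pos.mpr (hlt hq))).mpr (sub_le_self 1 (by positivity))
    _ ≤ exp (π ^ 2 / (6 * (m * s))) ^ k :=
        pow_le_pow_left₀ (prod_nonneg fun q hq ↦ inv_nonneg.mpr (sub_nonneg.mpr (hlt hq).le))
          (prod_Ico_one_inv_one_sub_exp_neg_pow_le hms _) k

end Blocks

section Optimization

lemma exists_pos_mul_add_div_eq_two_mul_sqrt {a b : ℝ} (ha : 0 < a) (hb : 0 < b) :
    ∃ s > 0, a * s + b / s = 2 * √(a * b) := by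
  refine ⟨√b / √a, by positivity, ?_⟩
  have hsa : a = √a ^ 2 := (Real.sq_sqrt ha.le).symm
  have hsb : b = √b ^ 2 := (Real.sq_sqrt hb.le).symm
  rw [Real.sqrt_mul ha.le]
  nth_rewrite 1 [hsa]
  nth_rewrite 2 [hsb]
  field_simp
  ring

lemma le_mul_exp_two_mul_sqrt_of_forall_pos {a b C P : ℝ} (ha : 0 ≤ a) (hb : 0 ≤ b) (hC : 0 ≤ C)
    (h : ∀ s > 0, P ≤ C * exp (a * s + b / s)) : P ≤ C * exp (2 * √(a * b)) := by
  -- The minimiser `√(b / a)` exists only for `a, b > 0`, so perturb both by `ε` and let `ε → 0`.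
  have hpert : ∀ ε > 0, P ≤ C * exp (2 * √((a + ε) * (b + ε))) := fun ε hε ↦ by
    obtain ⟨s, hs, heq⟩ := exists_pos_mul_add_div_eq_two_mul_sqrt (a := a + ε) (b := b + ε)
      (by positivity) (by positivity)
    refine (h s hs).trans ?_
    rw [← heq]
    gcongr <;> linarith
  have hlim : Filter.Tendsto (fun ε : ℝ ↦ C * exp (2 * √((a + ε) * (b + ε)))) (𝓝[>] 0)
      (𝓝 (C * exp (2 * √(a * b)))) := by
    refine (Continuous.tendsto' ?_ _ _ (by simp)).mono_left nhdsWithin_le_nhds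
    fun_prop
  exact ge_of_tendsto hlim (eventually_mem_nhdsWithin.mono hpert)

end Optimization

lemma partitionsIn_le_mul_exp {S : Set ℕ} {m k : ℕ} (hm : 0 < m)
    (hk : ∀ q, 0 < q → (S ∩ Set.Ico (q * m) ((q + 1) * m)).ncard ≤ k) (n : ℕ) {s : ℝ}
    (hs : 0 < s) :
    partitionsIn S n ≤
      ((n : ℝ) + 1) ^ (S ∩ Set.Ioo 0 m).ncard * exp (n * s + k * π ^ 2 / (6 * m) / s) := by
  classical
  have hsplit : partitionsIn S n * exp (-s) ^ n ≤
      ((n : ℝ) + 1) ^ (S ∩ Set.Ioo 0 m).ncard * exp (π ^ 2 / (6 * (m * s))) ^ k := by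
    refine (partitionsIn_mul_pow_le_prod_sum_pow (Real.exp_pos (-s)).le).trans ?_
    rw [← prod_filter_mul_prod_filter_not _ (· < m)]
    simp_rw [filter_filter, not_lt]
    exact mul_le_mul
      (prod_sum_pow_le_of_lt (Real.exp_pos _).le (Real.exp_le_one_iff.mpr (neg_nonpos.mpr hs.le)))
      (prod_sum_exp_neg_pow_le_of_le hs hm hk)
      (prod_nonneg fun _ _ ↦ by positivity) (by positivity)
  have hshift : exp (-s) ^ n = (exp (n * s))⁻¹ := by
    rw [← Real.exp_nat_mul, mul_neg, Real.exp_neg]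
  have hpow : exp (π ^ 2 / (6 * (m * s))) ^ k = exp (k * π ^ 2 / (6 * m) / s) := by
    rw [← Real.exp_nat_mul]
    congr 1
    field_simp
  rw [hshift, hpow, ← div_eq_mul_inv, div_le_iff₀ (Real.exp_pos _)] at hsplit
  rwa [Real.exp_add, mul_comm (exp (n * s)), ← mul_assoc]

theorem stmt_3_general {S : Set ℕ} {m k : ℕ} (hm : 0 < m)
    (hk : ∀ q, 0 < q → (S ∩ Set.Ico (q * m) ((q + 1) * m)).ncard ≤ k) (n : ℕ) :
    partitionsIn S n ≤
      ((n : ℝ) + 1) ^ (S ∩ Set.Ioo 0 m).ncard * exp (π * √(2 * k / (3 * m)) * √n) := by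
  have hexponent : 2 * √(n * (k * π ^ 2 / (6 * m))) = π * √(2 * k / (3 * m)) * √n := by
    have hsq : n * (k * π ^ 2 / (6 * m)) = (π / 2) ^ 2 * (2 * k / (3 * m)) * n := by ring
    rw [hsq, Real.sqrt_mul (by positivity), Real.sqrt_mul (by positivity),
      Real.sqrt_sq (by positivity)]
    ring
  rw [← hexponent]
  exact le_mul_exp_two_mul_sqrt_of_forall_pos (by positivity) (by positivity) (by positivity)
    fun s hs ↦ partitionsIn_le_mul_exp hm hk n hs

theorem stmt_3 (m : ℕ) (hm : 0 < m) (R : Finset ℕ) (hR : R ⊆ Finset.range m)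
    (A : Set ℕ) (hA : A = {a : ℕ | 0 < a ∧ a % m ∈ R})
    (c : ℝ) (hc : c = Real.pi * Real.sqrt (2 * R.card / (3 * m))) (n : ℕ) :
    (partitionsIn A n : ℝ) ≤ (n + 1) ^ (R.card + 1) * Real.exp (c * Real.sqrt n) := by
  subst hA hc
  refine (stmt_3_general hm (fun q _ ↦ ncard_residues_inter_Ico_le R q) n).trans ?_
  gcongr
  · simp
  · exact (ncard_residues_inter_Ioo_le R).trans (Nat.le_succ _)
end
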